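/- Let k ≥ 7 with k ≡ 3 (mod 4), and let M be the 𝔽₂ A_k-module obtained as the reduction mod 2 of the Specht module S^(k-2,2). Then every nonsplit extension 1 → M → H → A_k → 1 corresponding to a nonzero class in H²(A_k, M) yields a group H possessing a faithful transitive permutation representation of degree 2k(k-1). -/

import Mathlib

open Pointwise

/-- Permutation representation of `G` on `X → F` from an action of `G` on `X`. -/
def permRep (F G X : Type*) [CommRing F] [Group G] [MulAction G X] :
    Representation F G (X → F) where
  toFun g := LinearMap.funLeft F F (fun x => g⁻¹ • x)
  map_one' := by ext v x; simp
  map_mul' g h := by ext v x; simp [LinearMap.funLeft, mul_smul]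

variable {F G V : Type*} [CommRing F] [Group G] [AddCommGroup V] [Module F V]

/-- A submodule invariant under a representation. -/
def InvSub (ρ : Representation F G V) (U : Submodule F V) : Prop :=
  ∀ g, ∀ v ∈ U, ρ g v ∈ U

/-- The subrepresentation on an invariant submodule. -/
def subRep (ρ : Representation F G V) (U : Submodule F V)
    (hU : InvSub ρ U) : Representation F G U where
  toFun g := (ρ g).restrict (hU g)
  map_one' := by ext v; simp [LinearMap.restrict_apply]
  map_mul' g h := by ext v; simp [LinearMap.restrict_apply]

/-- The set of 2-element subsets of `{1,…,k}`. -/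
def Xk (k : ℕ) := {s : Finset (Fin k) // s.card = 2}

instance (k : ℕ) : Fintype (Xk k) := Subtype.fintype _
instance (k : ℕ) : DecidableEq (Xk k) := Subtype.instDecidableEq

instance (k : ℕ) : MulAction (Equiv.Perm (Fin k)) (Xk k) where
  smul g s := ⟨g • s.1, by rw [Finset.card_smul_finset]; exact s.2⟩
  one_smul s := Subtype.ext (one_smul _ s.1)
  mul_smul g h s := Subtype.ext (mul_smul g h s.1)

/-- The linear functional `v ↦ ∑_s w s * v s`. -/
noncomputable def formMap {X : Type*} [Fintype X] [DecidableEq X] (F : Type*) [CommRing F]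
    (w : X → F) : (X → F) →ₗ[F] F :=
  ∑ q : X, w q • (LinearMap.proj q : (X → F) →ₗ[F] F)

/-- Orthogonal complement of `U` with respect to the standard form. -/
noncomputable def perpSub {X : Type*} [Fintype X] [DecidableEq X] (F : Type*) [CommRing F]
    (U : Submodule F (X → F)) : Submodule F (X → F) :=
  ⨅ w : U, LinearMap.ker (formMap F (w : X → F))

/-- The orthogonal complement of an invariant submodule is invariant. -/
lemma perpSub_inv {X : Type*} [Fintype X] [DecidableEq X]
    (F G : Type*) [CommRing F] [Group G] [MulAction G X]
    (U : Submodule F (X → F)) (hU : InvSub (permRep F G X) U) :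
    InvSub (permRep F G X) (perpSub F U) := by
  intro g v hv
  have hv2 : ∀ w : U, ∑ q : X, (w : X → F) q * v q = 0 := by
    intro w
    have h2 := hv
    rw [perpSub] at h2
    have := (Submodule.mem_iInf _).mp h2 w
    simpa only [LinearMap.mem_ker, formMap, LinearMap.sum_apply,
      LinearMap.smul_apply, LinearMap.proj_apply, smul_eq_mul] using this
  rw [perpSub]
  refine (Submodule.mem_iInf _).mpr fun w => ?_
  simp only [LinearMap.mem_ker, formMap, LinearMap.sum_apply,
    LinearMap.smul_apply, LinearMap.proj_apply, smul_eq_mul]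
  calc ∑ q : X, (w : X → F) q * permRep F G X g v q
      = ∑ q : X, (w : X → F) (g • q) * v q := by
        exact Fintype.sum_equiv (MulAction.toPerm g).symm _ _ (fun q => by
          simp [MulAction.toPerm, permRep, LinearMap.funLeft])
    _ = 0 := by
        have hw : permRep F G X g⁻¹ (w : X → F) ∈ U := hU g⁻¹ w w.2
        have := hv2 ⟨_, hw⟩
        rw [← this]
        exact Finset.sum_congr rfl fun q _ => by
          simp [permRep, LinearMap.funLeft]

/-- `f = Σ_{i<j} e_{ij}`: the all-ones vector. -/
def allOnes (k : ℕ) : Xk k → ZMod 2 := fun _ => 1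

/-- `x_i = Σ_j e_{ij}`. -/
def xVec (k : ℕ) (i : Fin k) : Xk k → ZMod 2 := fun s => if i ∈ s.1 then 1 else 0

def P1 (k : ℕ) : Submodule (ZMod 2) (Xk k → ZMod 2) :=
  Submodule.span (ZMod 2) {allOnes k}

def P2 (k : ℕ) : Submodule (ZMod 2) (Xk k → ZMod 2) :=
  Submodule.span (ZMod 2) (Set.range (xVec k))

lemma P1_sup_P2_inv (k : ℕ) :
    InvSub (permRep (ZMod 2) (alternatingGroup (Fin k)) (Xk k)) (P1 k ⊔ P2 k) := by
  intro g v hv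
  have : (P1 k ⊔ P2 k).map (permRep (ZMod 2) (alternatingGroup (Fin k)) (Xk k) g)
      ≤ P1 k ⊔ P2 k := by
    rw [Submodule.map_sup, P1, P2, Submodule.map_span, Submodule.map_span]
    refine sup_le_sup (Submodule.span_le.mpr ?_) (Submodule.span_le.mpr ?_)
    · rintro - ⟨w, rfl, rfl⟩
      exact Submodule.subset_span rfl
    · rintro - ⟨-, ⟨i, rfl⟩, rfl⟩
      refine Submodule.subset_span ⟨(g : Equiv.Perm (Fin k)) i, ?_⟩
      funext s
      show xVec k ((g : Equiv.Perm (Fin k)) i) s = xVec k i (g⁻¹ • s)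
      have hmem : ((g : Equiv.Perm (Fin k)) i ∈ s.1) ↔ (i ∈ ((g⁻¹ • s : Xk k)).1) := by
        show _ ↔ i ∈ (g : Equiv.Perm (Fin k))⁻¹ • s.1
        rw [Finset.mem_inv_smul_finset_iff]
        exact Iff.rfl
      simp only [xVec, hmem]
  exact this ⟨v, hv, rfl⟩

/-- `P₃ = (P₁ + P₂)^⊥ ≅ S^(k-2,2)`, with its `A_k`-representation. -/
noncomputable def P3Rep (k : ℕ) :
    Representation (ZMod 2) (alternatingGroup (Fin k))
      (perpSub (ZMod 2) (P1 k ⊔ P2 k)) :=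
  subRep _ _ (perpSub_inv (ZMod 2) (alternatingGroup (Fin k)) _ (P1_sup_P2_inv k))

/-- Coset enumeration bound for the Carmichael presentation of the alternating group. -/
lemma carm_card {Q ι : Type*} [Group Q] [Finite Q] [DecidableEq ι] (y : ι → Q) (S : Finset ι)
    (h3 : ∀ i ∈ S, y i ^ 3 = 1) (h2 : ∀ i ∈ S, ∀ j ∈ S, i ≠ j → (y i * y j) ^ 2 = 1) :
    2 * Nat.card (Subgroup.closure (y '' (S : Set ι))) ≤ (S.card + 2).factorial := by
  classical
  induction S using Finset.induction_on with
  | empty => simp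
  | insert x S hx ih =>
    have ih' := ih (fun i hi => h3 i (Finset.mem_insert_of_mem hi))
      (fun i hi j hj => h2 i (Finset.mem_insert_of_mem hi) j (Finset.mem_insert_of_mem hj))
    set K := Subgroup.closure (y '' (S : Set ι)) with hK
    have hyK : ∀ i ∈ S, y i ∈ K := fun i hi => Subgroup.subset_closure ⟨i, hi, rfl⟩
    let z := y x
    let R : Finset Q := ({1, z, z⁻¹} : Finset Q) ∪ S.image (fun j => z⁻¹ * y j)
    have hR : R.card ≤ S.card + 3 := by
      have h1 := Finset.card_union_le ({1, z, z⁻¹} : Finset Q) (S.image (fun j => z⁻¹ * y j))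
      have h2 : (S.image (fun j => z⁻¹ * y j)).card ≤ S.card := Finset.card_image_le
      have h3 : ({1, z, z⁻¹} : Finset Q).card ≤ 3 := Finset.card_le_three
      show (({1, z, z⁻¹} : Finset Q) ∪ S.image (fun j => z⁻¹ * y j)).card ≤ _
      omega
    let U : Set Q := (fun p : Q × Q => p.1 * p.2) '' ((K : Set Q) ×ˢ (R : Set Q))
    have memU : ∀ (q κ : Q) (r : Q), κ ∈ K → r ∈ R → q = κ * r → q ∈ U := by
      intro q κ r h1 h2 h3
      exact ⟨(κ, r), ⟨h1, h2⟩, h3.symm⟩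
    have hR1 : (1 : Q) ∈ R := by simp [R]
    have hRz : z ∈ R := by simp [R]
    have hRzi : z⁻¹ ∈ R := by simp [R]
    have hRj : ∀ j ∈ S, z⁻¹ * y j ∈ R := by
      intro j hj
      exact Finset.mem_union_right _ (Finset.mem_image_of_mem _ hj)
    have z3 : z * z * z = 1 := by
      have := h3 x (Finset.mem_insert_self _ _)
      simpa [pow_succ] using this
    have y3 : ∀ j ∈ S, y j * y j * y j = 1 := by
      intro j hj
      have := h3 j (Finset.mem_insert_of_mem hj)
      simpa [pow_succ] using this
    have hzz : z * z = z⁻¹ := eq_inv_of_mul_eq_one_left z3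
    have hzi : z⁻¹ * z⁻¹ = z := by rw [← hzz]; calc
        z * z * (z * z) = (z * z * z) * z := by group
        _ = z := by rw [z3, one_mul]
    have hyy : ∀ j ∈ S, y j * y j = (y j)⁻¹ := fun j hj => eq_inv_of_mul_eq_one_left (y3 j hj)
    have hyz : ∀ j ∈ S, y j * z = z⁻¹ * (y j)⁻¹ := by
      intro j hj
      have := h2 j (Finset.mem_insert_of_mem hj) x (Finset.mem_insert_self _ _)
        (fun h => hx (h ▸ hj))
      rw [pow_two] at this
      rw [← mul_inv_rev]
      exact eq_inv_of_mul_eq_one_left this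
    have hzy : ∀ j ∈ S, z * y j = (y j)⁻¹ * z⁻¹ := by
      intro j hj
      have := h2 x (Finset.mem_insert_self _ _) j (Finset.mem_insert_of_mem hj)
        (fun h => hx (h ▸ hj))
      rw [pow_two] at this
      rw [← mul_inv_rev]
      exact eq_inv_of_mul_eq_one_left this
    have hij : ∀ i ∈ S, ∀ j ∈ S, i ≠ j → y j * y i = (y i)⁻¹ * (y j)⁻¹ := by
      intro i hi j hj hne
      have := h2 j (Finset.mem_insert_of_mem hj) i (Finset.mem_insert_of_mem hi) hne.symm
      rw [pow_two] at this
      rw [← mul_inv_rev]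
      exact eq_inv_of_mul_eq_one_left this
    have hzyi : ∀ j ∈ S, z * (y j)⁻¹ = (y j)⁻¹ * (z⁻¹ * y j) := by
      intro j hj
      rw [← hyy j hj, ← mul_assoc, hzy j hj, hyy j hj]; group
    -- closure under right multiplication by generators
    have step : ∀ u ∈ U, ∀ i ∈ insert x S, u * y i ∈ U := by
      rintro _ ⟨⟨κ, r⟩, ⟨hκ, hr⟩, rfl⟩ i hi
      simp only [SetLike.mem_coe] at hκ hr
      have hr' : r = 1 ∨ r = z ∨ r = z⁻¹ ∨ ∃ j ∈ S, z⁻¹ * y j = r := by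
        simpa [R, or_assoc] using hr
      rcases Finset.mem_insert.mp hi with rfl | hi
      · change κ * r * z ∈ U
        rcases hr' with rfl | rfl | rfl | ⟨j, hj, rfl⟩
        · exact memU _ κ z hκ hRz (by group)
        · exact memU _ κ z⁻¹ hκ hRzi (by rw [mul_assoc, hzz])
        · exact memU _ κ 1 hκ hR1 (by group)
        · refine memU _ (κ * (y j)⁻¹) (z⁻¹ * y j) (K.mul_mem hκ (K.inv_mem (hyK j hj))) (hRj j hj) ?_
          calc κ * (z⁻¹ * y j) * z = κ * (z⁻¹ * (y j * z)) := by group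
            _ = κ * ((z⁻¹ * z⁻¹) * (y j)⁻¹) := by rw [hyz j hj]; group
            _ = κ * (z * (y j)⁻¹) := by rw [hzi]
            _ = _ := by rw [hzyi j hj]; group
      · rcases hr' with rfl | rfl | rfl | ⟨j, hj, rfl⟩
        · exact memU _ (κ * y i) 1 (K.mul_mem hκ (hyK i hi)) hR1 (by group)
        · refine memU _ (κ * (y i)⁻¹) z⁻¹ (K.mul_mem hκ (K.inv_mem (hyK i hi))) hRzi ?_
          show κ * z * y i = _
          rw [mul_assoc, hzy i hi, mul_assoc]
        · exact memU _ κ (z⁻¹ * y i) hκ (hRj i hi) (by group)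
        · by_cases hne : i = j
          · subst hne
            refine memU _ (κ * y i) z (K.mul_mem hκ (hyK i hi)) hRz ?_
            show κ * (z⁻¹ * y i) * y i = _
            rw [mul_assoc, mul_assoc, hyy i hi, ← hyz i hi, mul_assoc]
          · refine memU _ (κ * (y i) * (y j)⁻¹) (z⁻¹ * y j)
              (K.mul_mem (K.mul_mem hκ (hyK i hi)) (K.inv_mem (hyK j hj))) (hRj j hj) ?_
            calc κ * (z⁻¹ * y j) * y i = κ * (z⁻¹ * (y j * y i)) := by group
              _ = κ * ((z⁻¹ * (y i)⁻¹) * (y j)⁻¹) := by rw [hij i hi j hj hne]; group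
              _ = κ * y i * (z * (y j)⁻¹) := by rw [← hyz i hi]; group
              _ = _ := by rw [hzyi j hj]; group
    have hsub : ((Subgroup.closure (y '' ((insert x S : Finset ι) : Set ι)) : Subgroup Q) : Set Q)
        ⊆ U := by
      intro q hq
      refine Subgroup.closure_induction_right (p := fun q _ => q ∈ U) ?_ ?_ ?_ hq
      · exact memU _ 1 1 K.one_mem hR1 (by group)
      · rintro u hu _ ⟨i, hi, rfl⟩ h
        exact step u h i hi
      · rintro u hu _ ⟨i, hi, rfl⟩ h
        have : (y i)⁻¹ = y i * y i := by
          symm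
          apply eq_inv_of_mul_eq_one_left
          have := h3 i hi
          simpa [pow_succ] using this
        rw [this, ← mul_assoc]
        exact step _ (step u h i hi) i hi
    have hU : U.ncard ≤ Nat.card K * R.card := by
      refine (Set.ncard_image_le (Set.toFinite _)).trans ?_
      rw [Set.ncard_prod, Set.ncard_coe_finset]
      exact le_rfl
    have hc : Nat.card (Subgroup.closure (y '' ((insert x S : Finset ι) : Set ι))) ≤ U.ncard := by
      exact Set.ncard_le_ncard hsub (Set.toFinite _)
    rw [Finset.card_insert_of_notMem hx]
    have : (S.card + 1 + 2).factorial = (S.card + 3) * (S.card + 2).factorial := Nat.factorial_succ _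
    rw [this]
    calc _ ≤ 2 * (Nat.card K * R.card) := by omega
      _ = (2 * Nat.card K) * R.card := by ring
      _ ≤ (S.card + 2).factorial * (S.card + 3) := Nat.mul_le_mul ih' hR
      _ = _ := mul_comm _ _

open Equiv in
/-- The 3-cycle `c → d → i → c`. -/
def tau {α : Type*} [DecidableEq α] (c d i : α) : Perm α := swap c d * swap d i

open Equiv in
lemma tau_c {α : Type*} [DecidableEq α] {c d i : α} (hcd : c ≠ d) (hci : c ≠ i) :
    tau c d i c = d := by
  simp [tau, swap_apply_of_ne_of_ne hcd hci]

open Equiv in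
lemma tau_d {α : Type*} [DecidableEq α] {c d i : α} (hci : c ≠ i) (hdi : d ≠ i) :
    tau c d i d = i := by
  simp [tau, swap_apply_of_ne_of_ne hci.symm hdi.symm]

open Equiv in
lemma tau_i {α : Type*} [DecidableEq α] {c d i : α} :
    tau c d i i = c := by
  simp [tau]

open Equiv in
lemma tau_o {α : Type*} [DecidableEq α] {c d i x : α} (h1 : x ≠ c) (h2 : x ≠ d) (h3 : x ≠ i) :
    tau c d i x = x := by
  simp [tau, swap_apply_of_ne_of_ne h1 h2, swap_apply_of_ne_of_ne h2 h3]

open Equiv in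
lemma sign_tau {α : Type*} [DecidableEq α] [Fintype α] {c d i : α} (hcd : c ≠ d) (hdi : d ≠ i) :
    Perm.sign (tau c d i) = 1 := by
  simp [tau, Perm.sign_swap hcd, Perm.sign_swap hdi]

open Equiv in
lemma tau_cube {α : Type*} [DecidableEq α] {c d i : α} (hcd : c ≠ d) (hci : c ≠ i) (hdi : d ≠ i) :
    tau c d i ^ 3 = 1 := by
  ext x
  by_cases h1 : x = c
  · subst h1; simp [pow_succ, tau_c hcd hci, tau_d hci hdi, tau_i]
  by_cases h2 : x = d
  · subst h2; simp [pow_succ, tau_c hcd hci, tau_d hci hdi, tau_i]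
  by_cases h3 : x = i
  · subst h3; simp [pow_succ, tau_c hcd hci, tau_d hci hdi, tau_i]
  simp [pow_succ, tau_o h1 h2 h3]

open Equiv in
lemma tau_mul {α : Type*} [DecidableEq α] {c d i j : α} (hcd : c ≠ d) (hci : c ≠ i) (hdi : d ≠ i)
    (hcj : c ≠ j) (hdj : d ≠ j) (hij : i ≠ j) :
    tau c d i * tau c d j = swap c i * swap d j := by
  ext x
  by_cases h1 : x = c
  · subst h1; simp [tau_c hcd hcj, tau_d hci hdi, swap_apply_of_ne_of_ne hcd hcj]
  by_cases h2 : x = d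
  · subst h2; simp [tau_d hcj hdj, tau_o hcj.symm hdj.symm hij.symm,
      swap_apply_of_ne_of_ne hcj.symm hij.symm]
  by_cases h4 : x = j
  · subst h4; simp [tau_i, tau_c hcd hci, swap_apply_of_ne_of_ne hcd.symm hdi]
  by_cases h3 : x = i
  · subst h3; simp [tau_i, tau_o h1 h2 h4, swap_apply_of_ne_of_ne h2 h4]
  simp [tau_o h1 h2 h3, tau_o h1 h2 h4, swap_apply_of_ne_of_ne h2 h4,
    swap_apply_of_ne_of_ne h1 h3]

open Equiv in
lemma gen_tau {α : Type*} [DecidableEq α] [Fintype α] {c d : α} (hcd : c ≠ d)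
    (T : Subgroup (Perm α)) (S : Finset α) (hc : c ∉ S) (hd : d ∉ S)
    (hT : ∀ i ∈ S, tau c d i ∈ T) :
    ∀ g : Perm α, Perm.sign g = 1 → (∀ x, x ∉ S → x ≠ c → x ≠ d → g x = x) → g ∈ T := by
  induction S using Finset.induction_on with
  | empty =>
    intro g hg hfix
    have hh : g = 1 ∨ g = swap c d := by
      have key : ∀ x, x = c ∨ x = d → g x = c ∨ g x = d := by
        intro x hx
        by_contra! hcon
        have := g.injective (hfix (g x) (by simp) hcon.1 hcon.2)
        rw [this] at hcon
        tauto
      have inj : g c ≠ g d := fun h => hcd (g.injective h)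
      rcases key c (Or.inl rfl) with h1 | h1
      · left
        have h2 : g d = d := (key d (Or.inr rfl)).resolve_left (fun h => inj (h1.trans h.symm))
        ext x
        by_cases hx : x = c
        · subst hx; simpa using h1
        by_cases hx' : x = d
        · subst hx'; simpa using h2
        simpa using hfix x (by simp) hx hx'
      · right
        have h2 : g d = c := (key d (Or.inr rfl)).resolve_right (fun h => inj (h1.trans h.symm))
        ext x
        by_cases hx : x = c
        · subst hx; simpa using h1
        by_cases hx' : x = d
        · subst hx'; simpa using h2
        rw [swap_apply_of_ne_of_ne hx hx']
        exact hfix x (by simp) hx hx'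
    rcases hh with rfl | rfl
    · exact T.one_mem
    · rw [Perm.sign_swap hcd] at hg
      exact absurd hg (by decide)
  | insert x S hx ih =>
    intro g hg hfix
    have hcx : c ≠ x := fun h => hc (by simp [h])
    have hdx : d ≠ x := fun h => hd (by simp [h])
    have hcS : c ∉ S := fun h => hc (by simp [h])
    have hdS : d ∉ S := fun h => hd (by simp [h])
    have ih' := ih hcS hdS (fun i hi => hT i (Finset.mem_insert_of_mem hi))
    have hTx := hT x (Finset.mem_insert_self _ _)
    suffices h : ∃ t ∈ T, Perm.sign t = 1 ∧ t (g x) = x ∧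
        ∀ z, z ∉ insert x S → z ≠ c → z ≠ d → t z = z by
      obtain ⟨t, ht, hs, h1, h2⟩ := h
      have : t * g ∈ T := by
        apply ih'
        · rw [Perm.sign_mul, hs, hg, one_mul]
        · intro z hz hzc hzd
          by_cases hzx : z = x
          · subst hzx; exact h1
          · have hz' : z ∉ insert x S := by simp [hzx, hz]
            rw [Perm.mul_apply, hfix z hz' hzc hzd, h2 z hz' hzc hzd]
      have := T.mul_mem (T.inv_mem ht) this
      simpa using this
    have sx := sign_tau (α := α) hcd hdx
    by_cases j1 : g x = x
    · exact ⟨1, T.one_mem, by simp, by simpa using j1, by simp⟩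
    by_cases j2 : g x = d
    · refine ⟨_, hTx, sx, by rw [j2, tau_d hcx hdx], ?_⟩
      intro z hz hzc hzd
      exact tau_o hzc hzd (fun h => hz (by simp [h]))
    by_cases j3 : g x = c
    · refine ⟨_, T.inv_mem hTx, by simp [sx], by rw [j3, Perm.inv_eq_iff_eq, tau_i], ?_⟩
      intro z hz hzc hzd
      rw [Perm.inv_eq_iff_eq, tau_o hzc hzd (fun h => hz (by simp [h]))]
    have j4 : g x ∈ S := by
      by_contra hcon
      have := hfix (g x) (by simp [hcon, j1]) j3 j2
      exact j1 (g.injective this)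
    have hcj : c ≠ g x := Ne.symm j3
    have hdj : d ≠ g x := Ne.symm j2
    refine ⟨(tau c d x)⁻¹ * tau c d (g x), T.mul_mem (T.inv_mem hTx)
      (hT _ (Finset.mem_insert_of_mem j4)), ?_, ?_, ?_⟩
    · simp [sx, sign_tau hcd hdj]
    · rw [Perm.mul_apply, tau_i, Perm.inv_eq_iff_eq, tau_i]
    · intro z hz hzc hzd
      rw [Perm.mul_apply, tau_o hzc hzd (fun h => hz (by simp [h, j4])), Perm.inv_eq_iff_eq,
        tau_o hzc hzd (fun h => hz (by simp [h]))]

/-- The 2-subset `{u,v}`. -/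
def pr {k : ℕ} (u v : Fin k) (h : u ≠ v) : Xk k := ⟨{u, v}, Finset.card_pair h⟩

lemma pr_comm {k : ℕ} (u v : Fin k) (h : u ≠ v) : pr u v h = pr v u h.symm :=
  Subtype.ext (Finset.pair_comm _ _)

lemma smul_pr {k : ℕ} (g : Equiv.Perm (Fin k)) (u v : Fin k) (h : u ≠ v) :
    g • pr u v h = pr (g u) (g v) (fun h' => h (g.injective h')) := by
  apply Subtype.ext
  show g • ({u, v} : Finset (Fin k)) = {g u, g v}
  simp [Finset.smul_finset_insert]

lemma exists_pr {k : ℕ} (P : Xk k) : ∃ u v, ∃ h : u ≠ v, P = pr u v h := by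
  obtain ⟨u, v, h, e⟩ := Finset.card_eq_two.mp P.2
  exact ⟨u, v, h, Subtype.ext e⟩

lemma pr_eq_iff {k : ℕ} {u v u' v' : Fin k} (h : u ≠ v) (h' : u' ≠ v') :
    pr u v h = pr u' v' h' ↔ (u = u' ∧ v = v') ∨ (u = v' ∧ v = u') := by
  constructor
  · intro e
    have e' : ({u, v} : Finset (Fin k)) = {u', v'} := congrArg Subtype.val e
    have h1 : u ∈ ({u', v'} : Finset (Fin k)) := by rw [← e']; simp
    have h2 : v ∈ ({u', v'} : Finset (Fin k)) := by rw [← e']; simp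
    simp only [Finset.mem_insert, Finset.mem_singleton] at h1 h2
    grind
  · rintro (⟨rfl, rfl⟩ | ⟨rfl, rfl⟩)
    · rfl
    · exact pr_comm _ _ _

set_option maxHeartbeats 1000000 in
open Equiv in
lemma comb {k : ℕ} (hk : 7 ≤ k) (hmod : k % 4 = 3) (m : Xk k → ZMod 2) (hsum : ∑ P, m P = 0)
    (p q r s a b : Fin k) (hpq : p ≠ q) (hpr : p ≠ r) (hps : p ≠ s) (hqr : q ≠ r) (hqs : q ≠ s)
    (hrs : r ≠ s) (hab : a ≠ b) (ha : a ∉ ({p, q, r, s} : Finset (Fin k)))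
    (hb : b ∉ ({p, q, r, s} : Finset (Fin k))) (t : Perm (Fin k))
    (ht : t = swap p q * swap r s)
    (h1 : ∀ P, m (t • P) = m P)
    (h2 : ∀ g : Perm (Fin k), Perm.sign g = 1 → g * t = t * g →
      ∀ P : Xk k, t • P = P → m (g • P) = m P) :
    m (pr a b hab) = 0 := by
  classical
  set B : Finset (Fin k) := {p, q, r, s} with hB
  have tp : t p = q := by simp [ht, swap_apply_of_ne_of_ne hpr hps]
  have tq : t q = p := by simp [ht, swap_apply_of_ne_of_ne hqr hqs]
  have tr : t r = s := by simp [ht, swap_apply_of_ne_of_ne hps.symm hqs.symm]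
  have ts : t s = r := by simp [ht, swap_apply_of_ne_of_ne hpr.symm hqr.symm]
  have tof : ∀ x, x ∉ B → t x = x := by
    intro x hx
    simp only [hB, Finset.mem_insert, Finset.mem_singleton, not_or] at hx
    simp [ht, swap_apply_of_ne_of_ne hx.1 hx.2.1, swap_apply_of_ne_of_ne hx.2.2.1 hx.2.2.2]
  have tt : ∀ x, t (t x) = x := by
    intro x
    by_cases hx : x ∈ B
    · simp only [hB, Finset.mem_insert, Finset.mem_singleton] at hx
      rcases hx with rfl | rfl | rfl | rfl <;> simp only [tp, tq, tr, ts]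
    · rw [tof x hx, tof x hx]
  have ttP : ∀ P : Xk k, t • t • P = P := by
    intro P
    obtain ⟨u, v, h, rfl⟩ := exists_pr P
    simp only [smul_pr, tt]
  -- the involution exchanging the two transpositions
  let g : Perm (Fin k) := swap p r * swap q s
  have gp : g p = r := by simp [g, swap_apply_of_ne_of_ne hpq hps]
  have gr : g r = p := by simp [g, swap_apply_of_ne_of_ne hqr.symm hrs]
  have gq : g q = s := by simp [g, swap_apply_of_ne_of_ne hps.symm hrs.symm]
  have gs : g s = q := by simp [g, swap_apply_of_ne_of_ne hpq.symm hqr]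
  have go : ∀ x, x ∉ B → g x = x := by
    intro x hx
    simp only [hB, Finset.mem_insert, Finset.mem_singleton, not_or] at hx
    simp [g, swap_apply_of_ne_of_ne hx.1 hx.2.2.1, swap_apply_of_ne_of_ne hx.2.1 hx.2.2.2]
  have gg : ∀ x, g (g x) = x := by
    intro x
    by_cases hx : x ∈ B
    · simp only [hB, Finset.mem_insert, Finset.mem_singleton] at hx
      rcases hx with rfl | rfl | rfl | rfl <;> simp only [gp, gq, gr, gs]
    · rw [go x hx, go x hx]
  have ggP : ∀ P : Xk k, g • g • P = P := by
    intro P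
    obtain ⟨u, v, h, rfl⟩ := exists_pr P
    simp only [smul_pr, gg]
  have gt : g * t = t * g := by
    ext x
    simp only [Perm.mul_apply]
    by_cases hx : x ∈ B
    · simp only [hB, Finset.mem_insert, Finset.mem_singleton] at hx
      rcases hx with rfl | rfl | rfl | rfl <;> simp only [gp, gq, gr, gs, tp, tq, tr, ts]
    · rw [go x hx, tof x hx, go x hx]
  have gsign : Perm.sign g = 1 := by simp [g, Perm.sign_swap hpr, Perm.sign_swap hqs]
  have z2 : ∀ x : ZMod 2, x + x = 0 := by decide
  -- pairs inside the fixed point set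
  have three : ∀ u v w : Fin k, ∀ (huv : u ≠ v) (hvw : v ≠ w), u ≠ w → u ∉ B → v ∉ B → w ∉ B →
      m (pr v w hvw) = m (pr u v huv) := by
    intro u v w huv hvw huw hu hv hw
    have c1 : tau u v w * t = t * tau u v w := by
      ext x
      simp only [Perm.mul_apply]
      by_cases hx : x ∈ B
      · have hn : ∀ y ∈ B, tau u v w y = y := fun y hy =>
          tau_o (fun h => hu (h ▸ hy)) (fun h => hv (h ▸ hy)) (fun h => hw (h ▸ hy))
        have htx : t x ∈ B := by
          simp only [hB, Finset.mem_insert, Finset.mem_singleton] at hx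
          rcases hx with rfl | rfl | rfl | rfl <;> simp [hB, tp, tq, tr, ts]
        rw [hn x hx, hn _ htx]
      · rw [tof x hx, tof]
        by_cases e1 : x = u
        · subst e1; rwa [tau_c huv huw]
        by_cases e2 : x = v
        · subst e2; rwa [tau_d huw hvw]
        by_cases e3 : x = w
        · subst e3; rwa [tau_i]
        rwa [tau_o e1 e2 e3]
    have := h2 _ (sign_tau huv hvw) c1 (pr u v huv) (by simp only [smul_pr, tof u hu, tof v hv])
    rw [← this]
    simp only [smul_pr, tau_c huv huw, tau_d huw hvw]
  have flip : ∀ (u v w : Fin k) (huv : u ≠ v) (huw : u ≠ w), u ∉ B → v ∉ B → w ∉ B →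
      m (pr u v huv) = m (pr u w huw) := by
    intro u v w huv huw hu hv hw
    by_cases hvw : v = w
    · subst hvw; rfl
    · rw [pr_comm u v huv]
      exact (three v u w huv.symm huw hvw hv hu hw).symm
  have const : ∀ (u v : Fin k) (huv : u ≠ v), u ∉ B → v ∉ B →
      m (pr u v huv) = m (pr a b hab) := by
    intro u v huv hu hv
    by_cases hua : u = a
    · subst hua; exact flip _ _ _ _ _ hu hv hb
    · rw [flip u v a huv hua hu hv ha, pr_comm, flip a u b (Ne.symm hua) hab ha hu hb]
  -- split the sum
  have hsplit1 := Finset.sum_filter_add_sum_filter_not (Finset.univ : Finset (Xk k))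
    (fun P => t • P = P) m
  have hz1 : ∑ P ∈ Finset.univ.filter (fun P : Xk k => ¬ t • P = P), m P = 0 := by
    refine Finset.sum_involution (fun P _ => t • P) ?_ ?_ ?_ ?_
    · intro P _; simp only [h1, z2]
    · intro P hP _; exact (Finset.mem_filter.mp hP).2
    · intro P hP
      have := (Finset.mem_filter.mp hP).2
      simp only [Finset.mem_filter, Finset.mem_univ, true_and]
      intro h; apply this; rw [ttP] at h; exact h.symm
    · intro P _; exact ttP P
  have hsplit2 := Finset.sum_filter_add_sum_filter_not
    (Finset.univ.filter (fun P : Xk k => t • P = P)) (fun P => g • P = P) m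
  have hz2 : ∑ P ∈ (Finset.univ.filter (fun P : Xk k => t • P = P)).filter
      (fun P => ¬ g • P = P), m P = 0 := by
    refine Finset.sum_involution (fun P _ => g • P) ?_ ?_ ?_ ?_
    · intro P hP
      simp only [Finset.mem_filter, Finset.mem_univ, true_and] at hP
      simp only [h2 g gsign gt P hP.1, z2]
    · intro P hP _; exact (Finset.mem_filter.mp hP).2
    · intro P hP
      simp only [Finset.mem_filter, Finset.mem_univ, true_and] at hP ⊢
      refine ⟨?_, ?_⟩
      · rw [← mul_smul, ← gt, mul_smul, hP.1]
      · intro h; apply hP.2; rw [ggP] at h; exact h.symm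
    · intro P _; exact ggP P
  have hset : ∀ P ∈ (Finset.univ.filter (fun P : Xk k => t • P = P)).filter
      (fun P => g • P = P), P.1 ⊆ Bᶜ := by
    intro P hP
    simp only [Finset.mem_filter, Finset.mem_univ, true_and] at hP
    obtain ⟨u, v, h, rfl⟩ := exists_pr P
    obtain ⟨hP1, hP2⟩ := hP
    rw [smul_pr, pr_eq_iff] at hP1 hP2
    have key : ∀ x ∈ B, t x ≠ x ∧ g x ≠ x ∧ t x ≠ g x := by
      intro x hx
      simp only [hB, Finset.mem_insert, Finset.mem_singleton] at hx
      rcases hx with rfl | rfl | rfl | rfl <;> simp only [gp, gq, gr, gs, tp, tq, tr, ts] <;>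
        refine ⟨?_, ?_, ?_⟩ <;> first | assumption | (apply Ne.symm; assumption)
    have hu : u ∉ B := fun hx => by have := key u hx; grind
    have hv : v ∉ B := fun hx => by have := key v hx; grind
    intro x hx
    have hx' : x = u ∨ x = v := by simpa [pr] using hx
    rcases hx' with rfl | rfl <;> simpa using by assumption
  have hset' : ∀ P : Xk k, P.1 ⊆ Bᶜ → P ∈ (Finset.univ.filter (fun P : Xk k => t • P = P)).filter
      (fun P => g • P = P) := by
    intro P hP
    obtain ⟨u, v, h, rfl⟩ := exists_pr P
    have hu : u ∉ B := by simpa using hP (show u ∈ ({u, v} : Finset (Fin k)) by simp)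
    have hv : v ∉ B := by simpa using hP (show v ∈ ({u, v} : Finset (Fin k)) by simp)
    simp only [Finset.mem_filter, Finset.mem_univ, true_and, smul_pr, tof u hu, tof v hv, go u hu,
      go v hv, and_self]
  have hc : ∑ P ∈ (Finset.univ.filter (fun P : Xk k => t • P = P)).filter
      (fun P => g • P = P), m P = ((k - 4).choose 2 : ℕ) * m (pr a b hab) := by
    rw [Finset.sum_congr rfl (g := fun _ => m (pr a b hab)), Finset.sum_const, nsmul_eq_mul]
    · congr 2
      have hBc : (Bᶜ).card = k - 4 := by
        rw [Finset.card_compl, Fintype.card_fin]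
        congr 1
        rw [hB, Finset.card_insert_of_notMem (by simp [hpq, hpr, hps]),
          Finset.card_insert_of_notMem (by simp [hqr, hqs]), Finset.card_pair hrs]
      rw [← hBc, ← Finset.card_powersetCard]
      refine Finset.card_bij (fun P _ => P.1) ?_ ?_ ?_
      · intro P hP
        exact Finset.mem_powersetCard.mpr ⟨hset P hP, P.2⟩
      · intro P _ P' _ e; exact Subtype.ext e
      · intro x hx
        obtain ⟨h1, h2⟩ := Finset.mem_powersetCard.mp hx
        exact ⟨⟨x, h2⟩, hset' ⟨x, h2⟩ h1, rfl⟩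
    · intro P hP
      have hP := hset P hP
      obtain ⟨u, v, h, rfl⟩ := exists_pr P
      have hu : u ∉ B := by simpa using hP (show u ∈ ({u, v} : Finset (Fin k)) by simp)
      have hv : v ∉ B := by simpa using hP (show v ∈ ({u, v} : Finset (Fin k)) by simp)
      exact const u v h hu hv
  rw [hz1, hsum, add_zero] at hsplit1
  rw [hz2, hsplit1, add_zero, hc] at hsplit2
  have hodd : (((k - 4).choose 2 : ℕ) : ZMod 2) = 1 := by
    obtain ⟨j, rfl⟩ : ∃ j, k = 4 * j + 7 := ⟨k / 4 - 1, by omega⟩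
    have : (4 * j + 7 - 4).choose 2 = 2 * (4 * j ^ 2 + 5 * j + 1) + 1 := by
      rw [Nat.choose_two_right]
      apply Nat.div_eq_of_eq_mul_left (by norm_num)
      have : 4 * j + 7 - 4 = 4 * j + 3 := by omega
      rw [this, Nat.add_sub_assoc (by norm_num)]
      norm_num
      ring
    rw [this]
    push_cast
    rw [show (2 : ZMod 2) = 0 from rfl]; simp
  rwa [hodd, one_mul] at hsplit2

lemma core {k : ℕ} (hk : 7 ≤ k) (hmod : k % 4 = 3) {H : Type*} [Group H] [Finite H]
    (N : Subgroup H) [hN : N.Normal] (π : H →* alternatingGroup (Fin k))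
    (hker : ∀ h, π h = 1 ↔ h ∈ N) (hsurj : Function.Surjective π)
    (val : H → Xk k → ZMod 2)
    (V1 : ∀ x ∈ N, ∀ y ∈ N, ∀ P, val (x * y) P = val x P + val y P)
    (V2 : ∀ h, ∀ n ∈ N, ∀ P, val (h * n * h⁻¹) ((π h : Equiv.Perm (Fin k)) • P) = val n P)
    (V3 : ∀ n ∈ N, (∀ P, val n P = 0) → n = 1)
    (V4 : ∀ P, ∃ n ∈ N, val n P = 1)
    (V5 : ∀ n ∈ N, ∑ P, val n P = 0) :
    ∃ H₀ : Subgroup H, H₀.index = 2 * (k * (k - 1)) ∧ H₀.normalCore = ⊥ := by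
  classical
  have z2 : ∀ x : ZMod 2, x + x = 0 := by decide
  have z01 : ∀ x : ZMod 2, x = 0 ∨ x = 1 := by decide
  have val1 : ∀ P, val 1 P = 0 := by
    intro P
    have := V1 1 N.one_mem 1 N.one_mem P
    rw [one_mul] at this
    exact left_eq_add.mp this
  have sq1 : ∀ n ∈ N, n * n = 1 := by
    intro n hn
    apply V3 _ (N.mul_mem hn hn)
    intro P; rw [V1 n hn n hn, z2]
  -- squares of lifts of double transpositions
  have double : ∀ (h : H) (p q r s a b : Fin k), p ≠ q → p ≠ r → p ≠ s → q ≠ r → q ≠ s →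
      r ≠ s → ∀ hab : a ≠ b, a ∉ ({p, q, r, s} : Finset (Fin k)) →
      b ∉ ({p, q, r, s} : Finset (Fin k)) →
      ((π h : Equiv.Perm (Fin k)) = Equiv.swap p q * Equiv.swap r s) → h * h ∈ N →
      val (h * h) (pr a b hab) = 0 := by
    intro h p q r s a b hpq hpr hps hqr hqs hrs hab ha hb ht hh
    refine comb hk hmod (val (h * h)) (V5 _ hh) p q r s a b hpq hpr hps hqr hqs hrs hab ha hb
      (π h : Equiv.Perm (Fin k)) ht ?_ ?_
    · intro P
      have := V2 h _ hh P
      rwa [show h * (h * h) * h⁻¹ = h * h by group] at this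
    · intro g hg hgt P hP
      obtain ⟨x, hx⟩ := hsurj ⟨g, Equiv.Perm.mem_alternatingGroup.mpr hg⟩
      have hx' : (π x : Equiv.Perm (Fin k)) = g := by rw [hx]
      have hcomm : π x * π h = π h * π x := by
        apply Subtype.ext
        simpa [hx'] using hgt
      have hn : h⁻¹ * (x * h * x⁻¹) ∈ N := by
        rw [← hker]
        simp [hcomm]
      set n := h⁻¹ * (x * h * x⁻¹) with hndef
      have hn' : h⁻¹ * n * h ∈ N := by simpa using hN.conj_mem n hn h⁻¹
      have e1 : x * (h * h) * x⁻¹ = (h * h) * ((h⁻¹ * n * h) * n) := by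
        rw [hndef]; group
      have e2 := V2 x _ hh P
      rw [hx', e1, V1 _ hh _ (N.mul_mem hn' hn), V1 _ hn' _ hn] at e2
      have hgP : (π h : Equiv.Perm (Fin k)) • (g • P) = g • P := by
        rw [← mul_smul, ← hgt, mul_smul, hP]
      have e3 := V2 h _ hn' (g • P)
      rw [hgP, show h * (h⁻¹ * n * h) * h⁻¹ = n by group] at e3
      rw [e3, z2, add_zero] at e2
      exact e2
  let a : Fin k := ⟨0, by omega⟩
  let b : Fin k := ⟨1, by omega⟩
  let c : Fin k := ⟨2, by omega⟩
  let d : Fin k := ⟨3, by omega⟩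
  have hab : a ≠ b := by simp [a, b]
  have hac : a ≠ c := by simp [a, c]
  have had : a ≠ d := by simp [a, d]
  have hbc : b ≠ c := by simp [c, b]
  have hbd : b ≠ d := by simp [d, b]
  have hcd : c ≠ d := by simp [c, d]
  clear_value a b c d
  let S : Finset (Fin k) := ({a, b, c, d} : Finset (Fin k))ᶜ
  have hScard : S.card = k - 4 := by
    rw [Finset.card_compl, Fintype.card_fin]
    congr 1
    rw [Finset.card_insert_of_notMem (by simp [hab, hac, had]),
      Finset.card_insert_of_notMem (by simp [hbc, hbd]), Finset.card_pair hcd]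
  have hS : ∀ i, i ∈ S ↔ i ≠ a ∧ i ≠ b ∧ i ≠ c ∧ i ≠ d := by
    intro i; simp [S]
  let P0 := pr a b hab
  let fix : Subgroup (alternatingGroup (Fin k)) := fixingSubgroup _ ({a, b} : Set (Fin k))
  have hfix : ∀ g : alternatingGroup (Fin k), g ∈ fix ↔
      (g : Equiv.Perm (Fin k)) a = a ∧ (g : Equiv.Perm (Fin k)) b = b := by
    intro g
    simp only [fix, mem_fixingSubgroup_iff, Set.mem_insert_iff, Set.mem_singleton_iff,
      forall_eq_or_imp, forall_eq]
    rfl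
  have tr2 : MulAction.IsMultiplyPretransitive (alternatingGroup (Fin k)) (Fin k) 2 := by
    have := alternatingGroup.isMultiplyPretransitive (Fin k)
    refine MulAction.isMultiplyPretransitive_of_le (n := Nat.card (Fin k) - 2) ?_ (Nat.sub_le _ _)
    simp; omega
  have fixidx : fix.index * (k - 2).factorial = k.factorial := by
    have := tr2.index_of_fixingSubgroup_mul (s := ({a, b} : Set (Fin k))) (Set.ncard_pair hab)
    simpa using this
  have kfac : k.factorial = (k * (k - 1)) * (k - 2).factorial := by
    obtain ⟨j, rfl⟩ : ∃ j, k = j + 2 := ⟨k - 2, by omega⟩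
    simp [Nat.factorial_succ, mul_assoc]
  have fixidx' : fix.index = k * (k - 1) := by
    rw [kfac] at fixidx
    exact Nat.eq_of_mul_eq_mul_right (Nat.factorial_pos _) fixidx
  have fixcard : 2 * Nat.card fix = (k - 2).factorial := by
    have h1 := Subgroup.card_mul_index fix
    haveI : Nontrivial (Fin k) := ⟨a, b, hab⟩
    have h2 : 2 * Nat.card (alternatingGroup (Fin k)) = k.factorial := by
      rw [two_mul_nat_card_alternatingGroup, Nat.card_perm, Nat.card_fin]
    rw [← h1, ← fixidx] at h2
    have hpos : 0 < fix.index := by rw [fixidx']; apply Nat.mul_pos <;> omega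
    apply Nat.eq_of_mul_eq_mul_left hpos
    rw [← h2]; ring
  -- the subgroups
  let L : Subgroup H := fix.comap π
  have hLidx : L.index = k * (k - 1) := by
    rw [← fixidx']; exact Subgroup.index_comap_of_surjective _ hsurj
  have hNL : N ≤ L := by
    intro n hn
    show π n ∈ fix
    rw [(hker n).mpr hn]; exact fix.one_mem
  have hP0 : ∀ h ∈ L, (π h : Equiv.Perm (Fin k)) • P0 = P0 := by
    intro h hh
    have := (hfix _).mp (show π h ∈ fix from hh)
    simp only [P0, smul_pr, this.1, this.2]
  let M0 : Subgroup H :=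
    { carrier := {h | h ∈ N ∧ val h P0 = 0}
      one_mem' := ⟨N.one_mem, val1 _⟩
      mul_mem' := by
        rintro x y ⟨hx, hx'⟩ ⟨hy, hy'⟩
        exact ⟨N.mul_mem hx hy, by rw [V1 x hx y hy, hx', hy', add_zero]⟩
      inv_mem' := by
        rintro x ⟨hx, hx'⟩
        rw [show x⁻¹ = x from (eq_inv_of_mul_eq_one_left (sq1 x hx)).symm]
        exact ⟨hx, hx'⟩ }
  have memM0 : ∀ h, h ∈ M0 ↔ h ∈ N ∧ val h P0 = 0 := fun h => Iff.rfl
  let M1 : Subgroup L := M0.subgroupOf L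
  haveI hM1 : M1.Normal := by
    constructor
    rintro n hn g
    rw [Subgroup.mem_subgroupOf, memM0] at hn ⊢
    refine ⟨hN.conj_mem _ hn.1 _, ?_⟩
    have := V2 g _ hn.1 P0
    rw [hP0 g g.2, hn.2] at this
    exact this
  have tauA : ∀ i ∈ S, tau c d i ∈ alternatingGroup (Fin k) := by
    intro i hi
    rw [Equiv.Perm.mem_alternatingGroup]
    exact sign_tau hcd ((hS i).mp hi).2.2.2.symm
  have lifts : ∀ i : Fin k, ∃ y : L, i ∈ S →
      y ^ 3 = 1 ∧ (π (y : H) : Equiv.Perm (Fin k)) = tau c d i := by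
    intro i
    by_cases hi : i ∈ S
    · obtain ⟨h, hh⟩ := hsurj ⟨_, tauA i hi⟩
      have hi' := (hS i).mp hi
      have t3 : (π h) ^ 3 = 1 := by
        rw [hh]; apply Subtype.ext
        simpa using tau_cube hcd hi'.2.2.1.symm hi'.2.2.2.symm
      have p4 : π (h ^ 4) = ⟨_, tauA i hi⟩ := by
        rw [map_pow, pow_succ, t3, one_mul, hh]
      refine ⟨⟨h ^ 4, ?_⟩, fun _ => ⟨?_, ?_⟩⟩
      · show π (h ^ 4) ∈ fix
        rw [hfix, p4]
        exact ⟨tau_o hac had hi'.1.symm, tau_o hbc hbd hi'.2.1.symm⟩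
      · apply Subtype.ext
        show (h ^ 4) ^ 3 = 1
        have h3 : h ^ 3 ∈ N := by rw [← hker, map_pow, t3]
        calc (h ^ 4) ^ 3 = (h ^ 3 * h ^ 3) * (h ^ 3 * h ^ 3) := by group
          _ = 1 := by rw [sq1 _ h3, one_mul]
      · show ((π (h ^ 4)) : Equiv.Perm (Fin k)) = _
        rw [p4]
    · exact ⟨1, fun h => absurd h hi⟩
  choose y hy using lifts
  let ybar : Fin k → L ⧸ M1 := fun i => QuotientGroup.mk' M1 (y i)
  let D : Subgroup (L ⧸ M1) := Subgroup.closure (ybar '' (S : Set (Fin k)))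
  have hD : 2 * Nat.card D ≤ (k - 2).factorial := by
    have := carm_card ybar S ?_ ?_
    · rwa [hScard, show k - 4 + 2 = k - 2 by omega] at this
    · intro i hi
      show (QuotientGroup.mk' M1 (y i)) ^ 3 = 1
      rw [← map_pow, (hy i hi).1, map_one]
    · intro i hi j hj hij
      show (QuotientGroup.mk' M1 (y i) * QuotientGroup.mk' M1 (y j)) ^ 2 = 1
      rw [← map_mul, ← map_pow]
      have hi' := (hS i).mp hi
      have hj' := (hS j).mp hj
      have ht : (π ((y i : H) * (y j : H)) : Equiv.Perm (Fin k))
          = Equiv.swap c i * Equiv.swap d j := by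
        rw [map_mul, Subgroup.coe_mul, (hy i hi).2, (hy j hj).2]
        exact tau_mul hcd hi'.2.2.1.symm hi'.2.2.2.symm hj'.2.2.1.symm hj'.2.2.2.symm hij
      have hsq : ((y i : H) * (y j : H)) * ((y i : H) * (y j : H)) ∈ N := by
        rw [← hker, map_mul]
        apply Subtype.ext
        rw [Subgroup.coe_mul, ht]
        have hcm : Equiv.swap c i * Equiv.swap d j = Equiv.swap d j * Equiv.swap c i := by
          apply Equiv.Perm.Disjoint.commute
          apply Equiv.Perm.disjoint_swap_swap
          simp [hcd, hi'.2.2.1.symm, hj'.2.2.1.symm, hi'.2.2.2, hij, hj'.2.2.2.symm]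
        calc Equiv.swap c i * Equiv.swap d j * (Equiv.swap c i * Equiv.swap d j)
            = (Equiv.swap c i * Equiv.swap d j) * (Equiv.swap d j * Equiv.swap c i) := by
              rw [← hcm]
          _ = 1 := by
            rw [mul_assoc, ← mul_assoc (Equiv.swap d j), Equiv.swap_mul_self, one_mul,
              Equiv.swap_mul_self]
      rw [QuotientGroup.mk'_apply, QuotientGroup.eq_one_iff, Subgroup.mem_subgroupOf, memM0]
      have hcoe : (((y i * y j) ^ 2 : L) : H)
          = ((y i : H) * (y j : H)) * ((y i : H) * (y j : H)) := by
        rw [pow_two]; rfl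
      rw [hcoe]
      refine ⟨hsq, double _ c i d j a b hi'.2.2.1.symm hcd hj'.2.2.1.symm hi'.2.2.2 hij
        hj'.2.2.2.symm hab ?_ ?_ ht hsq⟩
      · simp [hac, had, hi'.1.symm, hj'.1.symm]
      · simp [hbc, hbd, hi'.2.1.symm, hj'.2.1.symm]
  let ψ : L ⧸ M1 →* alternatingGroup (Fin k) :=
    QuotientGroup.lift M1 (π.comp L.subtype) (by
      intro n hn
      rw [Subgroup.mem_subgroupOf, memM0] at hn
      exact (hker _).mpr hn.1)
  have hψ : ∀ x : L, ψ (QuotientGroup.mk' M1 x) = π x := fun x => rfl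
  have onto : ∀ g : alternatingGroup (Fin k), g ∈ fix → ∃ q ∈ D, ψ q = g := by
    intro g hg
    have hT : (g : Equiv.Perm (Fin k)) ∈ D.map ((alternatingGroup (Fin k)).subtype.comp ψ) := by
      refine gen_tau hcd _ S (by simp [S]) (by simp [S]) ?_ _
        (Equiv.Perm.mem_alternatingGroup.mp g.2) ?_
      · intro i hi
        refine ⟨ybar i, Subgroup.subset_closure ⟨i, hi, rfl⟩, ?_⟩
        exact (hy i hi).2
      · intro x hx hxc hxd
        have hg' := (hfix g).mp hg
        by_cases hxa : x = a
        · rw [hxa]; exact hg'.1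
        by_cases hxb : x = b
        · rw [hxb]; exact hg'.2
        exact absurd ((hS x).mpr ⟨hxa, hxb, hxc, hxd⟩) hx
    obtain ⟨q, hq, e⟩ := hT
    exact ⟨q, hq, Subtype.ext e⟩
  have hψfix : ∀ q, ψ q ∈ fix := by
    intro q
    obtain ⟨x, rfl⟩ := QuotientGroup.mk'_surjective M1 q
    exact x.2
  let f : D → fix := fun q => ⟨ψ q, hψfix q⟩
  have fsurj : Function.Surjective f := by
    rintro ⟨g, hg⟩
    obtain ⟨q, hq, e⟩ := onto g hg
    exact ⟨⟨q, hq⟩, Subtype.ext e⟩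
  have finj : Function.Injective f :=
    (fsurj.bijective_of_nat_card_le (by omega)).1
  have Dker : ∀ q ∈ D, ψ q = 1 → q = 1 := by
    intro q hq h
    have := @finj ⟨q, hq⟩ 1 (Subtype.ext (by simpa [f] using h))
    exact congrArg Subtype.val this
  let H0 : Subgroup H := (D.comap (QuotientGroup.mk' M1)).map L.subtype
  have memH0 : ∀ h, h ∈ H0 ↔ ∃ hh : h ∈ L, QuotientGroup.mk' M1 ⟨h, hh⟩ ∈ D := by
    intro h
    constructor
    · rintro ⟨x, hx, rfl⟩; exact ⟨x.2, hx⟩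
    · rintro ⟨hh, hx⟩; exact ⟨⟨h, hh⟩, hx, rfl⟩
  have H0L : H0 ≤ L := fun h hh => ((memH0 h).mp hh).1
  have M0H0 : ∀ n ∈ M0, n ∈ H0 := by
    intro n hn
    refine (memH0 n).mpr ⟨hNL hn.1, ?_⟩
    have : QuotientGroup.mk' M1 ⟨n, hNL hn.1⟩ = 1 := by
      rw [QuotientGroup.mk'_apply, QuotientGroup.eq_one_iff, Subgroup.mem_subgroupOf]
      exact hn
    rw [this]; exact D.one_mem
  have H0N : ∀ n ∈ H0, n ∈ N → val n P0 = 0 := by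
    intro n hn hnN
    obtain ⟨hh, hx⟩ := (memH0 n).mp hn
    have h1 := Dker _ hx (by rw [hψ]; exact (hker n).mpr hnN)
    rw [QuotientGroup.mk'_apply, QuotientGroup.eq_one_iff, Subgroup.mem_subgroupOf] at h1
    exact h1.2
  refine ⟨H0, ?_, ?_⟩
  · rw [← Subgroup.relIndex_mul_index H0L, hLidx]
    congr 1
    rw [Subgroup.relIndex_eq_two_iff_exists_notMem_and']
    obtain ⟨z, hz, hz1⟩ := V4 P0
    refine ⟨z, hNL hz, fun h => ?_, fun x hx => ?_⟩
    · have := H0N z h hz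
      rw [hz1] at this
      exact absurd this (by decide)
    · obtain ⟨q, hq, e⟩ := onto (π x) hx
      obtain ⟨w, rfl⟩ := QuotientGroup.mk'_surjective M1 q
      rw [hψ] at e
      have hw : (w : H) ∈ H0 := (memH0 _).mpr ⟨w.2, hq⟩
      have hn : x * (w : H)⁻¹ ∈ N := by rw [← hker, map_mul, map_inv, e, mul_inv_cancel]
      rcases z01 (val (x * (w : H)⁻¹) P0) with h0 | h0
      · right
        have := H0.mul_mem (M0H0 _ ⟨hn, h0⟩) hw
        simpa using this
      · left
        have h0' : z * (x * (w : H)⁻¹) ∈ M0 := ⟨N.mul_mem hz hn, by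
          rw [V1 z hz _ hn, hz1, h0, z2]⟩
        have := H0.mul_mem (M0H0 _ h0') hw
        simpa [mul_assoc] using this
  · rw [eq_bot_iff]
    intro x hx
    have hconj : ∀ g : H, g * x * g⁻¹ ∈ H0 := hx
    rw [MulAction.is_two_pretransitive_iff] at tr2
    have hxN : x ∈ N := by
      rw [← hker]
      apply Subtype.ext
      ext1 u
      show (π x : Equiv.Perm (Fin k)) u = u
      obtain ⟨v, hv⟩ : ∃ v : Fin k, u ≠ v := by
        by_cases h : u = a
        · exact ⟨b, h ▸ hab⟩
        · exact ⟨a, h⟩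
      obtain ⟨g', hg1, -⟩ := tr2 hv hab
      obtain ⟨g, rfl⟩ := hsurj g'
      have h1 : π (g * x * g⁻¹) ∈ fix := H0L (hconj g)
      have h2 := ((hfix _).mp h1).1
      have hg1' : (π g : Equiv.Perm (Fin k)) u = a := hg1
      rw [← hg1', map_mul, map_mul, map_inv] at h2
      simpa using h2
    have : x = 1 := by
      apply V3 x hxN
      intro P
      obtain ⟨u, v, h, rfl⟩ := exists_pr P
      obtain ⟨g', hg1, hg2⟩ := tr2 h hab
      obtain ⟨g, rfl⟩ := hsurj g'
      have hg1' : (π g : Equiv.Perm (Fin k)) u = a := hg1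
      have hg2' : (π g : Equiv.Perm (Fin k)) v = b := hg2
      rw [← V2 g x hxN]
      simp only [smul_pr, hg1', hg2']
      exact H0N _ (hconj g) (hN.conj_mem _ hxN _)
    simpa using this

lemma mem_perp_iff {k : ℕ} (v : Xk k → ZMod 2) :
    v ∈ perpSub (ZMod 2) (P1 k ⊔ P2 k) ↔ ∀ w ∈ P1 k ⊔ P2 k, ∑ q, w q * v q = 0 := by
  rw [perpSub, Submodule.mem_iInf]
  simp only [LinearMap.mem_ker, formMap, LinearMap.sum_apply,
      LinearMap.smul_apply, LinearMap.proj_apply, smul_eq_mul, Subtype.forall]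

lemma mem_perp {k : ℕ} (v : Xk k → ZMod 2) (h0 : ∑ q, v q = 0)
    (hi : ∀ i, ∑ q, xVec k i q * v q = 0) : v ∈ perpSub (ZMod 2) (P1 k ⊔ P2 k) := by
  rw [mem_perp_iff]
  intro w hw
  have hle : P1 k ⊔ P2 k ≤ LinearMap.ker (formMap (ZMod 2) v) := by
    refine sup_le (Submodule.span_le.mpr ?_) (Submodule.span_le.mpr ?_)
    · rintro _ rfl
      simpa [formMap, allOnes] using h0
    · rintro _ ⟨i, rfl⟩
      have := hi i
      simpa [formMap, mul_comm] using this
  have := hle hw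
  simpa [formMap, mul_comm] using this

lemma exists_val_one {k : ℕ} (hk : 7 ≤ k) (P : Xk k) :
    ∃ v ∈ perpSub (ZMod 2) (P1 k ⊔ P2 k), v P = 1 := by
  classical
  obtain ⟨a, b, hab, rfl⟩ := exists_pr P
  obtain ⟨c, hc⟩ : ∃ c, c ∉ ({a, b} : Finset (Fin k)) := by
    by_contra! h
    have := Finset.card_le_card (show Finset.univ ⊆ ({a, b} : Finset (Fin k)) from fun x _ => h x)
    have h2 := Finset.card_le_two (a := a) (b := b)
    simp at this; omega
  obtain ⟨d, hd⟩ : ∃ d, d ∉ ({a, b, c} : Finset (Fin k)) := by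
    by_contra! h
    have := Finset.card_le_card (show Finset.univ ⊆ ({a, b, c} : Finset (Fin k)) from fun x _ => h x)
    have h2 := Finset.card_le_three (a := a) (b := b) (c := c)
    simp at this; omega
  simp only [Finset.mem_insert, Finset.mem_singleton, not_or] at hc hd
  have hbc : b ≠ c := Ne.symm hc.2
  have hcd : c ≠ d := Ne.symm hd.2.2
  have hda : d ≠ a := hd.1
  let v : Xk k → ZMod 2 := fun q => (if q = pr a b hab then 1 else 0)
    + (if q = pr b c hbc then 1 else 0) + (if q = pr c d hcd then 1 else 0)
    + (if q = pr d a hda then 1 else 0)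
  have hs : ∀ w : Xk k → ZMod 2, ∑ q, w q * v q
      = w (pr a b hab) + w (pr b c hbc) + w (pr c d hcd) + w (pr d a hda) := by
    intro w
    simp [v, mul_add, Finset.sum_add_distrib]
  refine ⟨v, mem_perp v ?_ ?_, ?_⟩
  · have := hs (fun _ => 1)
    simp only [one_mul] at this
    rw [this]; decide
  · intro i
    rw [hs]
    have hx : ∀ (u w : Fin k) (h : u ≠ w), xVec k i (pr u w h)
        = (if i = u then 1 else 0) + (if i = w then 1 else 0) := by
      intro u w h
      simp only [xVec, pr, Finset.mem_insert, Finset.mem_singleton]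
      by_cases h1 : i = u
      · have h2 : i ≠ w := fun h' => h (h1.symm.trans h')
        simp [h1, h]
      · simp [h1]
    simp only [hx]
    generalize (if i = a then (1 : ZMod 2) else 0) = x1
    generalize (if i = b then (1 : ZMod 2) else 0) = x2
    generalize (if i = c then (1 : ZMod 2) else 0) = x3
    generalize (if i = d then (1 : ZMod 2) else 0) = x4
    revert x1 x2 x3 x4
    decide
  · have hne : ∀ (u w : Fin k) (h : u ≠ w), (u ≠ a ∧ u ≠ b) ∨ (w ≠ a ∧ w ≠ b) →
      ¬ pr a b hab = pr u w h := by
      intro u w h hh e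
      rw [pr_eq_iff] at e
      grind
    simp only [v]
    rw [if_pos trivial, if_neg (hne b c hbc (Or.inr hc)), if_neg (hne c d hcd (Or.inl hc)),
      if_neg (hne d a hda (Or.inl ⟨hd.1, hd.2.1⟩))]
    decide

/-- **(Guralnick–Liebeck, Corollary 4.4.)** Let `k ≥ 7` with `k ≡ 3 (mod 4)`, and let
`M = P₃ ≅ S^(k-2,2) (mod 2)` be the reduction mod 2 of the Specht module `S^(k-2,2)`,
realized as the summand `(P₁+P₂)^⊥` of the `𝔽₂ A_k`-permutation module on 2-subsets.
Every nonsplit extension `1 → M → H → A_k → 1` (identified via an isomorphism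
`e : N ≃ M` that is equivariant for the conjugation action of `H` and the `A_k`-module
structure of `M`) has a faithful transitive permutation representation of degree
`2k(k-1)`, i.e. `H` has a corefree subgroup of index `2k(k-1)`. -/
theorem nonsplit_extension_by_S_k22_has_perm_rep
    (k : ℕ) (hk : 7 ≤ k) (hmod : k % 4 = 3)
    (H : Type*) [Group H] [Finite H]
    (N : Subgroup H) [hN : N.Normal]
    (iso : H ⧸ N ≃* alternatingGroup (Fin k))
    (e : N ≃* Multiplicative (perpSub (ZMod 2) (P1 k ⊔ P2 k)))
    (hequiv : ∀ (h : H) (n : N),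
      Multiplicative.toAdd (e ⟨h * (n : H) * h⁻¹, hN.conj_mem _ n.2 h⟩)
        = P3Rep k (iso (QuotientGroup.mk' N h)) (Multiplicative.toAdd (e n)))
    (nonsplit : ¬ ∃ K : Subgroup H, N.IsComplement' K) :
    ∃ H₀ : Subgroup H, H₀.index = 2 * (k * (k - 1)) ∧ H₀.normalCore = ⊥ := by
  classical
  let val : H → Xk k → ZMod 2 := fun h P =>
    if hn : h ∈ N then (Multiplicative.toAdd (e ⟨h, hn⟩)).1 P else 0
  have hval : ∀ h (hn : h ∈ N) P, val h P = (Multiplicative.toAdd (e ⟨h, hn⟩)).1 P := by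
    intro h hn P
    simp only [val, dif_pos hn]
  let π : H →* alternatingGroup (Fin k) := iso.toMonoidHom.comp (QuotientGroup.mk' N)
  refine core hk hmod N π ?_ ?_ val ?_ ?_ ?_ ?_ ?_
  · intro h
    show iso (QuotientGroup.mk' N h) = 1 ↔ h ∈ N
    rw [map_eq_one_iff iso iso.injective, QuotientGroup.mk'_apply, QuotientGroup.eq_one_iff]
  · exact iso.surjective.comp (QuotientGroup.mk'_surjective N)
  · intro x hx y hy P
    rw [hval _ (N.mul_mem hx hy), hval x hx, hval y hy]
    have : (⟨x * y, N.mul_mem hx hy⟩ : N) = ⟨x, hx⟩ * ⟨y, hy⟩ := rfl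
    rw [this, map_mul]
    rfl
  · intro h n hn P
    rw [hval _ (hN.conj_mem _ hn h), hval n hn]
    rw [hequiv h ⟨n, hn⟩]
    show (Multiplicative.toAdd (e ⟨n, hn⟩)).1
      ((π h : Equiv.Perm (Fin k))⁻¹ • (π h : Equiv.Perm (Fin k)) • P) = _
    rw [inv_smul_smul]
  · intro n hn h
    have h1 : Multiplicative.toAdd (e ⟨n, hn⟩) = 0 := by
      apply Subtype.ext
      funext P
      rw [← hval n hn P, h P]
      rfl
    have h2 : e ⟨n, hn⟩ = 1 := h1
    rw [map_eq_one_iff e e.injective] at h2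
    exact congrArg Subtype.val h2
  · intro P
    obtain ⟨v, hv, hvP⟩ := exists_val_one hk P
    refine ⟨(e.symm (Multiplicative.ofAdd ⟨v, hv⟩) : N), Subtype.property _, ?_⟩
    rw [hval _ (Subtype.property _)]
    simpa using hvP
  · intro n hn
    have := (mem_perp_iff _).mp (Multiplicative.toAdd (e ⟨n, hn⟩)).2 (allOnes k)
      (Submodule.mem_sup_left (Submodule.mem_span_singleton_self _))
    simpa [allOnes, hval n hn] using this
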